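/- Jensen inequality for the projected p-Fisher information: for every p ∈ (1,2] and every smooth h : 𝕋^d × ℝ^d → (0,∞) bounded above and below by positive constants with bounded gradient, ∫_{𝕋^d} (Πh(x))^{p−2} |∇_x Πh(x)|² dx ≤ ∫_{𝕋^d × ℝ^d} h^{p−2} |∇_x h|² dμ. -/

import Mathlib

/-!
For `1 < p ≤ 2` the function `(a, b) ↦ a ^ (p - 2) * |b|²` is jointly convex on `a > 0`, and
`(Πh, ∇_x Πh)` is the Gaussian average in `v` of `(h, ∇_x h)`. Jensen's inequality for the
probability measure `ℳ(v) dv` therefore gives, at every `x`,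
`(Πh)^{p-2} |∇_x Πh|² ≤ Π(h^{p-2} |∇_x h|²)`, and integrating over the torus finishes the proof.

Convexity enters as the tangent-plane inequality `tangent_le`, one component of the gradient at a
time; `jensen_gauss` integrates it; `grad1_proj` is the exchange `∇_x Πh = Π(∇_x h)`, by dominated
differentiation.
-/

open MeasureTheory Real Filter

noncomputable section

/-- The standard Gaussian density `ℳ(v) = (2π)^{-d/2} exp(-|v|²/2)` on `ℝ^d`. -/
def gauss (d : ℕ) (v : Fin d → ℝ) : ℝ :=
  (2 * Real.pi) ^ (-(d : ℝ) / 2) * Real.exp (-(∑ i, v i ^ 2) / 2)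

/-- Fundamental domain `[0,1]^d` of the torus `𝕋^d`; the normalized Lebesgue measure on
the torus is the restriction of Lebesgue measure to this cube. -/
def cube (d : ℕ) : Set (Fin d → ℝ) := Set.Icc 0 1

/-- A function of `(x,v)` represents a function on `𝕋^d × ℝ^d` iff it is `ℤ^d`-periodic in `x`. -/
def IsPeriodic (d : ℕ) (f : (Fin d → ℝ) → (Fin d → ℝ) → ℝ) : Prop :=
  ∀ (x v : Fin d → ℝ) (k : Fin d → ℤ), f (x + fun i => (k i : ℝ)) v = f x v

/-- The projection `Πf(x) = ∫ f(x,u) ℳ(u) du`. -/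
def proj (d : ℕ) (f : (Fin d → ℝ) → (Fin d → ℝ) → ℝ) (x : Fin d → ℝ) : ℝ :=
  ∫ u, f x u * gauss d u

/-- Euclidean dot product on `ℝ^d`. -/
def dotp (d : ℕ) (a b : Fin d → ℝ) : ℝ := ∑ i, a i * b i

/-- Squared Euclidean norm on `ℝ^d`. -/
def nsq (d : ℕ) (a : Fin d → ℝ) : ℝ := ∑ i, a i ^ 2

/-- Gradient in the `x` variable. -/
def gradx (d : ℕ) (f : (Fin d → ℝ) → (Fin d → ℝ) → ℝ) (x v : Fin d → ℝ) : Fin d → ℝ :=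
  fun i => fderiv ℝ (fun y => f y v) x (Pi.single i 1)

/-- Gradient in the `v` variable. -/
def gradv (d : ℕ) (f : (Fin d → ℝ) → (Fin d → ℝ) → ℝ) (x v : Fin d → ℝ) : Fin d → ℝ :=
  fun i => fderiv ℝ (fun w => f x w) v (Pi.single i 1)

/-- Gradient of a function of `x` only. -/
def grad1 (d : ℕ) (g : (Fin d → ℝ) → ℝ) (x : Fin d → ℝ) : Fin d → ℝ :=
  fun i => fderiv ℝ g x (Pi.single i 1)

/-- Laplacian in the `v` variable. -/
def lapv (d : ℕ) (f : (Fin d → ℝ) → (Fin d → ℝ) → ℝ) (x v : Fin d → ℝ) : ℝ :=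
  ∑ i, fderiv ℝ (fun w => gradv d f x w i) v (Pi.single i 1)

/-- Integral against `μ = ℳ(v) dv dx` on `𝕋^d × ℝ^d`. -/
def intMu (d : ℕ) (F : (Fin d → ℝ) → (Fin d → ℝ) → ℝ) : ℝ :=
  ∫ x in cube d, ∫ v, F x v * gauss d v

/-- `I^X(h) = ∫ |∇_x h|²/h dμ`. -/
def IX (d : ℕ) (h : (Fin d → ℝ) → (Fin d → ℝ) → ℝ) : ℝ :=
  intMu d fun x v => nsq d (gradx d h x v) / h x v

/-- `I^V(h) = ∫ |∇_v h|²/h dμ`. -/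
def IV (d : ℕ) (h : (Fin d → ℝ) → (Fin d → ℝ) → ℝ) : ℝ :=
  intMu d fun x v => nsq d (gradv d h x v) / h x v

/-- `I^M(h) = ∫ (∇_x h · ∇_v h)/h dμ`. -/
def IM (d : ℕ) (h : (Fin d → ℝ) → (Fin d → ℝ) → ℝ) : ℝ :=
  intMu d fun x v => dotp d (gradx d h x v) (gradv d h x v) / h x v

/-- The full Fisher information `I(h) = ∫ |∇_{x,v} h|²/h dμ`. -/
def Ifull (d : ℕ) (h : (Fin d → ℝ) → (Fin d → ℝ) → ℝ) : ℝ :=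
  intMu d fun x v => (nsq d (gradx d h x v) + nsq d (gradv d h x v)) / h x v

/-- `I^{ΠX}(h) = ∫_{𝕋^d} |∇_x Πh|²/Πh dx`. -/
def IPiX (d : ℕ) (h : (Fin d → ℝ) → (Fin d → ℝ) → ℝ) : ℝ :=
  ∫ x in cube d, nsq d (grad1 d (proj d h) x) / proj d h x

/-- `I^{ΠX/X}(h) = ∫ (|∇_x(Πh/h)|²/(Πh/h)) h dμ`. -/
def IPiXX (d : ℕ) (h : (Fin d → ℝ) → (Fin d → ℝ) → ℝ) : ℝ :=
  intMu d fun x v =>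
    nsq d (gradx d (fun y w => proj d h y / h y w) x v) / (proj d h x / h x v) * h x v

/-- `I^{ΠV/V}(h) = ∫ (|∇_v h|²/h)(Πh/h) dμ`. -/
def IPiVV (d : ℕ) (h : (Fin d → ℝ) → (Fin d → ℝ) → ℝ) : ℝ :=
  intMu d fun x v => nsq d (gradv d h x v) / h x v * (proj d h x / h x v)

/-- The relative entropy `H(h) = ∫ h log h dμ`. -/
def Hent (d : ℕ) (h : (Fin d → ℝ) → (Fin d → ℝ) → ℝ) : ℝ :=
  intMu d fun x v => h x v * Real.log (h x v)

/-- The projected entropy `H_Π(h) = ∫_{𝕋^d} Πh log Πh dx`. -/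
def HPi (d : ℕ) (h : (Fin d → ℝ) → (Fin d → ℝ) → ℝ) : ℝ :=
  ∫ x in cube d, proj d h x * Real.log (proj d h x)

/-- The local average speed `U(x) = ∫ v h(x,v) ℳ(v) dv`. -/
def Uvec (d : ℕ) (h : (Fin d → ℝ) → (Fin d → ℝ) → ℝ) (x : Fin d → ℝ) : Fin d → ℝ :=
  fun i => ∫ v, v i * h x v * gauss d v

/-- The divergence `∇_x · U`. -/
def divU (d : ℕ) (h : (Fin d → ℝ) → (Fin d → ℝ) → ℝ) (x : Fin d → ℝ) : ℝ :=
  ∑ i, fderiv ℝ (fun y => Uvec d h y i) x (Pi.single i 1)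

/-- The `p`-entropy `H^{(p)}(h) = ∫ (h^p - h)/(p(p-1)) dμ`. -/
def Hp (d : ℕ) (p : ℝ) (h : (Fin d → ℝ) → (Fin d → ℝ) → ℝ) : ℝ :=
  intMu d fun x v => (h x v ^ p - h x v) / (p * (p - 1))

/-- The projected `p`-entropy `H_Π^{(p)}(h) = ∫_{𝕋^d} ((Πh)^p - Πh)/(p(p-1)) dx`. -/
def HpPi (d : ℕ) (p : ℝ) (h : (Fin d → ℝ) → (Fin d → ℝ) → ℝ) : ℝ :=
  ∫ x in cube d, ((proj d h x) ^ p - proj d h x) / (p * (p - 1))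

/-- The `p`-Fisher information `I^{(p)}(h) = ∫ h^{p-2} |∇_{x,v} h|² dμ`. -/
def Ipfull (d : ℕ) (p : ℝ) (h : (Fin d → ℝ) → (Fin d → ℝ) → ℝ) : ℝ :=
  intMu d fun x v => h x v ^ (p - 2) * (nsq d (gradx d h x v) + nsq d (gradv d h x v))

/-- The spatial `p`-Fisher information `∫ h^{p-2} |∇_x h|² dμ`. -/
def IpX (d : ℕ) (p : ℝ) (h : (Fin d → ℝ) → (Fin d → ℝ) → ℝ) : ℝ :=
  intMu d fun x v => h x v ^ (p - 2) * nsq d (gradx d h x v)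

/-- Regularity of a time-dependent `h`: smooth, periodic in `x`, bounded above and below by
positive constants, with all partial derivatives bounded. -/
def Regular (d : ℕ) (h : ℝ → (Fin d → ℝ) → (Fin d → ℝ) → ℝ) : Prop :=
  ContDiff ℝ (⊤ : ℕ∞) (fun q : ℝ × (Fin d → ℝ) × (Fin d → ℝ) => h q.1 q.2.1 q.2.2) ∧
  (∀ t, IsPeriodic d (h t)) ∧
  (∃ c C : ℝ, 0 < c ∧ ∀ t x v, c ≤ h t x v ∧ h t x v ≤ C) ∧
  (∀ n : ℕ, ∃ C : ℝ, ∀ q : ℝ × (Fin d → ℝ) × (Fin d → ℝ),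
    ‖iteratedFDeriv ℝ n (fun r : ℝ × (Fin d → ℝ) × (Fin d → ℝ) => h r.1 r.2.1 r.2.2) q‖ ≤ C)

/-- Regularity of a time-independent `h`: smooth, periodic in `x`, bounded above and below by
positive constants, with bounded gradient. -/
def RegularStatic (d : ℕ) (h : (Fin d → ℝ) → (Fin d → ℝ) → ℝ) : Prop :=
  ContDiff ℝ (⊤ : ℕ∞) (fun q : (Fin d → ℝ) × (Fin d → ℝ) => h q.1 q.2) ∧
  IsPeriodic d h ∧
  (∃ c C : ℝ, 0 < c ∧ ∀ x v, c ≤ h x v ∧ h x v ≤ C) ∧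
  (∃ C : ℝ, ∀ q : (Fin d → ℝ) × (Fin d → ℝ),
    ‖fderiv ℝ (fun r : (Fin d → ℝ) × (Fin d → ℝ) => h r.1 r.2) q‖ ≤ C)

/-- `h` solves the linear relaxation Boltzmann equation `∂_t h + v·∇_x h = λ(Πh - h)` for `t ≥ 0`. -/
def SolvesLRB (d : ℕ) (lam : ℝ) (h : ℝ → (Fin d → ℝ) → (Fin d → ℝ) → ℝ) : Prop :=
  ∀ t x v, 0 ≤ t →
    deriv (fun s => h s x v) t + dotp d v (gradx d (h t) x v)
      = lam * (proj d (h t) x - h t x v)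

/-- `h` solves the free transport equation `∂_t h + v·∇_x h = 0` for `t ≥ 0`. -/
def SolvesTransport (d : ℕ) (h : ℝ → (Fin d → ℝ) → (Fin d → ℝ) → ℝ) : Prop :=
  ∀ t x v, 0 ≤ t →
    deriv (fun s => h s x v) t + dotp d v (gradx d (h t) x v) = 0

/-- `h` solves the pure relaxation equation `∂_t h = λ(Πh - h)` for `t ≥ 0`. -/
def SolvesCollision (d : ℕ) (lam : ℝ) (h : ℝ → (Fin d → ℝ) → (Fin d → ℝ) → ℝ) : Prop :=
  ∀ t x v, 0 ≤ t →
    deriv (fun s => h s x v) t = lam * (proj d (h t) x - h t x v)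

/-- `h` solves the kinetic Fokker–Planck equation `∂_t h + v·∇_x h = Δ_v h - v·∇_v h` for `t ≥ 0`. -/
def SolvesKFP (d : ℕ) (h : ℝ → (Fin d → ℝ) → (Fin d → ℝ) → ℝ) : Prop :=
  ∀ t x v, 0 ≤ t →
    deriv (fun s => h s x v) t + dotp d v (gradx d (h t) x v)
      = lapv d (h t) x v - dotp d v (gradv d (h t) x v)

/-! ### The Gaussian density -/

lemma gauss_eq_prod (d : ℕ) (v : Fin d → ℝ) :
    gauss d v = ∏ i, ProbabilityTheory.gaussianPDFReal 0 1 (v i) := by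
  have h2π : (0 : ℝ) ≤ 2 * π := by positivity
  simp only [gauss, ProbabilityTheory.gaussianPDFReal, Finset.prod_mul_distrib, Finset.prod_const,
    Finset.card_univ, Fintype.card_fin, ← Real.exp_sum, NNReal.coe_one, mul_one, sub_zero]
  congr 1
  · rw [Real.sqrt_eq_rpow, ← Real.rpow_neg h2π, ← Real.rpow_natCast, ← Real.rpow_mul h2π]
    congr 1
    ring
  · rw [← Finset.sum_div, Finset.sum_neg_distrib]

lemma gauss_nonneg (d : ℕ) (v : Fin d → ℝ) : 0 ≤ gauss d v := by
  unfold gauss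
  positivity

lemma continuous_gauss (d : ℕ) : Continuous (gauss d) := by
  unfold gauss
  fun_prop

lemma integrable_gauss (d : ℕ) : Integrable (gauss d) := by
  have h := Integrable.fintype_prod (μ := fun _ : Fin d => (volume : Measure ℝ))
    (f := fun _ : Fin d => ProbabilityTheory.gaussianPDFReal 0 1)
    (fun _ => ProbabilityTheory.integrable_gaussianPDFReal 0 1)
  simp only [← gauss_eq_prod] at h
  exact h

lemma integral_gauss (d : ℕ) : ∫ v, gauss d v = 1 := by
  simp only [gauss_eq_prod]
  rw [integral_fintype_prod_volume_eq_pow,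
    ProbabilityTheory.integral_gaussianPDFReal_eq_one 0 one_ne_zero, one_pow]

lemma integrable_mul_gauss {d : ℕ} {f : (Fin d → ℝ) → ℝ} (hf : Continuous f) {M : ℝ}
    (hM : ∀ v, |f v| ≤ M) : Integrable fun v => f v * gauss d v :=
  (integrable_gauss d).bdd_mul hf.aestronglyMeasurable (ae_of_all _ hM)

/-! ### Jensen's inequality for the perspective-type function `(a, b) ↦ a ^ (p - 2) * b ^ 2` -/

/-- The graph of `(a, b) ↦ a ^ (p - 2) * b ^ 2` on `a > 0` lies above its tangent plane at
`(A, B)`: joint convexity for `1 ≤ p ≤ 2`, obtained by completing the square in `b` and using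
Bernoulli's inequality for the concave power `a ^ (2 - p)`. -/
lemma tangent_le {p a A : ℝ} (hp1 : 1 ≤ p) (hp2 : p ≤ 2) (ha : 0 < a) (hA : 0 < A) (b B : ℝ) :
    A ^ (p - 2) * B ^ 2 + (p - 2) * A ^ (p - 2) * B ^ 2 / A * (a - A)
      + 2 * A ^ (p - 2) * B * (b - B) ≤ a ^ (p - 2) * b ^ 2 := by
  have hbern : (a / A) ^ (2 - p) ≤ 1 + (2 - p) * (a / A - 1) := by
    have := rpow_one_add_le_one_add_mul_self (s := a / A - 1)
      (by have := div_pos ha hA; linarith) (p := 2 - p) (by linarith) (by linarith)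
    simpa using this
  have hα : 0 < a ^ (p - 2) := rpow_pos_of_pos ha _
  have hT : 0 < A ^ (p - 2) := rpow_pos_of_pos hA _
  have hratio : (a / A) ^ (2 - p) = A ^ (p - 2) / a ^ (p - 2) := by
    rw [show 2 - p = -(p - 2) by ring, Real.rpow_neg (div_pos ha hA).le,
      Real.div_rpow ha.le hA.le, inv_div]
  rw [hratio] at hbern
  generalize a ^ (p - 2) = α at *
  generalize A ^ (p - 2) = T at *
  have hsq : 2 * b * (T * B) - T * B ^ 2 * (T / α) ≤ α * b ^ 2 := by
    have h0 : 0 ≤ α * (b - T * B / α) ^ 2 := by positivity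
    have h1 : α * (b - T * B / α) ^ 2
        = α * b ^ 2 - (2 * b * (T * B) - T * B ^ 2 * (T / α)) := by
      field_simp
      ring
    linarith
  have hmul := mul_le_mul_of_nonneg_left hbern (by positivity : 0 ≤ T * B ^ 2)
  have hlin : (p - 2) * T * B ^ 2 / A * (a - A) = (p - 2) * (T * B ^ 2) * (a / A - 1) := by
    field_simp
  rw [hlin]
  nlinarith

/-- Jensen's inequality for `(a, b) ↦ a ^ (p - 2) * b ^ 2` under the Gaussian measure: the tangent
plane at the mean integrates to the value at the mean. -/
lemma jensen_gauss {d : ℕ} {p c C M : ℝ} (hp1 : 1 ≤ p) (hp2 : p ≤ 2) (hc : 0 < c)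
    {a b : (Fin d → ℝ) → ℝ} (ha : Continuous a) (hb : Continuous b)
    (hac : ∀ v, c ≤ a v) (haC : ∀ v, a v ≤ C) (hbM : ∀ v, |b v| ≤ M)
    (hint : Integrable fun v => a v ^ (p - 2) * b v ^ 2 * gauss d v) :
    (∫ v, a v * gauss d v) ^ (p - 2) * (∫ v, b v * gauss d v) ^ 2
      ≤ ∫ v, a v ^ (p - 2) * b v ^ 2 * gauss d v := by
  have hg := integrable_gauss d
  have hia : Integrable fun v => a v * gauss d v :=
    integrable_mul_gauss ha (M := C) fun v => by
      rw [abs_of_pos (hc.trans_le (hac v))]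
      exact haC v
  have hib : Integrable fun v => b v * gauss d v := integrable_mul_gauss hb hbM
  set A := ∫ v, a v * gauss d v with hAdef
  set B := ∫ v, b v * gauss d v with hBdef
  have hA : 0 < A := by
    refine hc.trans_le ?_
    have : ∫ v, c * gauss d v ≤ A := integral_mono (hg.const_mul c) hia fun v =>
      mul_le_mul_of_nonneg_right (hac v) (gauss_nonneg d v)
    rwa [integral_const_mul, integral_gauss, mul_one] at this
  set T := A ^ (p - 2)
  set K := (p - 2) * T * B ^ 2 / A
  set L := 2 * T * B
  have i1 : Integrable fun v => (T * B ^ 2 - K * A - L * B) * gauss d v := hg.const_mul _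
  have i12 : Integrable fun v => (T * B ^ 2 - K * A - L * B) * gauss d v
      + K * (a v * gauss d v) := hg.const_mul _ |>.add (hia.const_mul _)
  have i2 : Integrable fun v => K * (a v * gauss d v) := hia.const_mul _
  have i3 : Integrable fun v => L * (b v * gauss d v) := hib.const_mul _
  have hle : ∫ v, ((T * B ^ 2 - K * A - L * B) * gauss d v + K * (a v * gauss d v)
      + L * (b v * gauss d v)) ≤ ∫ v, a v ^ (p - 2) * b v ^ 2 * gauss d v := by
    refine integral_mono (i12.add i3) hint fun v => ?_
    have h1 := mul_le_mul_of_nonneg_right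
      (tangent_le hp1 hp2 (hc.trans_le (hac v)) hA (b v) B) (gauss_nonneg d v)
    refine le_trans (le_of_eq ?_) h1
    simp only [K, L, T]
    ring
  rw [integral_add i12 i3, integral_add i1 i2, integral_const_mul, integral_const_mul,
    integral_const_mul, integral_gauss, ← hAdef, ← hBdef] at hle
  linarith

/-! ### Differentiation under the Gaussian integral -/

section Regularity

variable {d : ℕ} {h : (Fin d → ℝ) → (Fin d → ℝ) → ℝ}

lemma hasFDerivAt_left
    (hs : ContDiff ℝ (⊤ : ℕ∞) (fun q : (Fin d → ℝ) × (Fin d → ℝ) => h q.1 q.2))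
    (x v : Fin d → ℝ) :
    HasFDerivAt (fun y => h y v)
      ((fderiv ℝ (fun q : (Fin d → ℝ) × (Fin d → ℝ) => h q.1 q.2) (x, v)).comp
        (ContinuousLinearMap.inl ℝ (Fin d → ℝ) (Fin d → ℝ))) x := by
  have h1 : HasFDerivAt (fun q : (Fin d → ℝ) × (Fin d → ℝ) => h q.1 q.2) _ (x, v) :=
    ((hs.differentiable (by simp)) (x, v)).hasFDerivAt
  exact HasFDerivAt.comp (f := fun y => (y, v)) x h1 (hasFDerivAt_prodMk_left (𝕜 := ℝ) x v)

lemma continuous_fderiv_left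
    (hs : ContDiff ℝ (⊤ : ℕ∞) (fun q : (Fin d → ℝ) × (Fin d → ℝ) => h q.1 q.2)) :
    Continuous fun q : (Fin d → ℝ) × (Fin d → ℝ) => fderiv ℝ (fun y => h y q.2) q.1 := by
  simp only [fun q : (Fin d → ℝ) × (Fin d → ℝ) => (hasFDerivAt_left hs q.1 q.2).fderiv]
  exact (hs.continuous_fderiv (by simp)).clm_comp continuous_const

lemma norm_fderiv_left_le
    (hs : ContDiff ℝ (⊤ : ℕ∞) (fun q : (Fin d → ℝ) × (Fin d → ℝ) => h q.1 q.2)) {M : ℝ}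
    (hM : ∀ q : (Fin d → ℝ) × (Fin d → ℝ),
      ‖fderiv ℝ (fun r : (Fin d → ℝ) × (Fin d → ℝ) => h r.1 r.2) q‖ ≤ M) (x v : Fin d → ℝ) :
    ‖fderiv ℝ (fun y => h y v) x‖ ≤ M := by
  rw [(hasFDerivAt_left hs x v).fderiv]
  refine (ContinuousLinearMap.opNorm_comp_le _ _).trans ?_
  refine (mul_le_of_le_one_right (norm_nonneg _) ?_).trans (hM _)
  exact ContinuousLinearMap.norm_inl_le_one ℝ _ _

/-- `∇_x Πh = Π(∇_x h)`. -/
lemma grad1_proj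
    (hs : ContDiff ℝ (⊤ : ℕ∞) (fun q : (Fin d → ℝ) × (Fin d → ℝ) => h q.1 q.2)) {C M : ℝ}
    (hC : ∀ x v, |h x v| ≤ C) (hM : ∀ x v, ‖fderiv ℝ (fun y => h y v) x‖ ≤ M)
    (x : Fin d → ℝ) (i : Fin d) :
    grad1 d (proj d h) x i = ∫ v, gradx d h x v i * gauss d v := by
  have hcont (y : Fin d → ℝ) : Continuous (h y) :=
    hs.continuous.comp (continuous_const.prodMk continuous_id)
  have hint (y : Fin d → ℝ) : Integrable fun v => h y v * gauss d v :=
    integrable_mul_gauss (hcont y) (hC y)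
  have hbd (y v : Fin d → ℝ) : ‖gauss d v • fderiv ℝ (fun z => h z v) y‖ ≤ M * gauss d v := by
    rw [norm_smul, Real.norm_of_nonneg (gauss_nonneg d v), mul_comm]
    exact mul_le_mul_of_nonneg_right (hM y v) (gauss_nonneg d v)
  have hmeas : AEStronglyMeasurable
      (fun v => gauss d v • fderiv ℝ (fun z => h z v) x) volume :=
    ((continuous_gauss d).smul ((continuous_fderiv_left hs).comp
      (continuous_const.prodMk continuous_id))).aestronglyMeasurable
  have hder := hasFDerivAt_integral_of_dominated_of_fderiv_le (𝕜 := ℝ) (μ := volume)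
    (F := fun y v => h y v * gauss d v)
    (F' := fun y v => gauss d v • fderiv ℝ (fun z => h z v) y)
    (bound := fun v => M * gauss d v) (x₀ := x) (s := Set.univ) Filter.univ_mem
    (Eventually.of_forall fun y => (hint y).aestronglyMeasurable) (hint x) hmeas
    (ae_of_all _ fun v y _ => hbd y v) ((integrable_gauss d).const_mul M)
    (ae_of_all _ fun v y _ =>
      (hasFDerivAt_left hs y v).differentiableAt.hasFDerivAt.mul_const (gauss d v))
  have hI : Integrable fun v => gauss d v • fderiv ℝ (fun z => h z v) x :=
    ((integrable_gauss d).const_mul M).mono' hmeas (ae_of_all _ fun v => hbd x v)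
  have hfd : fderiv ℝ (proj d h) x = ∫ v, gauss d v • fderiv ℝ (fun z => h z v) x := hder.fderiv
  rw [grad1, hfd, ContinuousLinearMap.integral_apply hI]
  refine integral_congr_ae (ae_of_all _ fun v => ?_)
  simp [gradx, mul_comm]

end Regularity

/-- Jensen inequality for the projected `p`-Fisher information:
`∫_{𝕋^d} (Πh)^{p-2} |∇_x Πh|² dx ≤ ∫ h^{p-2} |∇_x h|² dμ`. -/
theorem projected_p_fisher_le_p_fisher
    (d : ℕ) (hd : 1 ≤ d) (p : ℝ) (hp1 : 1 < p) (hp2 : p ≤ 2)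
    (h : (Fin d → ℝ) → (Fin d → ℝ) → ℝ)
    (hpos : ∀ x v, 0 < h x v) (hreg : RegularStatic d h) :
    (∫ x in cube d, (proj d h x) ^ (p - 2) * nsq d (grad1 d (proj d h) x))
      ≤ intMu d fun x v => h x v ^ (p - 2) * nsq d (gradx d h x v) := by
  obtain ⟨hs, -, ⟨c, C, hc, hcC⟩, M, hM⟩ := hreg
  have hfd := norm_fderiv_left_le hs hM
  have hgc (i : Fin d) :
      Continuous fun q : (Fin d → ℝ) × (Fin d → ℝ) => gradx d h q.1 q.2 i :=
    (continuous_fderiv_left hs).clm_apply continuous_const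
  have hgb (i : Fin d) (x v : Fin d → ℝ) : |gradx d h x v i| ≤ M := by
    have h1 := (fderiv ℝ (fun y => h y v) x).le_opNorm (Pi.single i 1)
    rw [Pi.norm_single, norm_one, mul_one] at h1
    exact h1.trans (hfd x v)
  have habs (x v : Fin d → ℝ) : |h x v| ≤ C := by
    rw [abs_of_pos (hpos x v)]
    exact (hcC x v).2
  -- The `i`-th density `h ^ (p - 2) * (∂_i h) ^ 2` is continuous and bounded.
  have hFc (i : Fin d) : Continuous fun q : (Fin d → ℝ) × (Fin d → ℝ) =>
      h q.1 q.2 ^ (p - 2) * gradx d h q.1 q.2 i ^ 2 :=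
    (hs.continuous.rpow_const fun q => Or.inl (hpos q.1 q.2).ne').mul ((hgc i).pow 2)
  have hFb (i : Fin d) (x v : Fin d → ℝ) :
      |h x v ^ (p - 2) * gradx d h x v i ^ 2| ≤ c ^ (p - 2) * M ^ 2 := by
    have h1 : h x v ^ (p - 2) ≤ c ^ (p - 2) :=
      Real.rpow_le_rpow_of_nonpos hc (hcC x v).1 (by linarith)
    have h2 : gradx d h x v i ^ 2 ≤ M ^ 2 := sq_le_sq' (abs_le.1 (hgb i x v)).1
      (abs_le.1 (hgb i x v)).2
    rw [abs_of_nonneg (mul_nonneg (rpow_nonneg (hpos x v).le _) (sq_nonneg _))]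
    exact mul_le_mul h1 h2 (sq_nonneg _) (rpow_nonneg hc.le _)
  have hFi (i : Fin d) (x : Fin d → ℝ) :
      Integrable fun v => h x v ^ (p - 2) * gradx d h x v i ^ 2 * gauss d v :=
    integrable_mul_gauss ((hFc i).comp (continuous_const.prodMk continuous_id)) (hFb i x)
  have hsum (x : Fin d → ℝ) : ∫ v, h x v ^ (p - 2) * nsq d (gradx d h x v) * gauss d v
      = ∑ i, ∫ v, h x v ^ (p - 2) * gradx d h x v i ^ 2 * gauss d v := by
    rw [← integral_finsetSum _ fun i _ => hFi i x]
    refine integral_congr_ae (ae_of_all _ fun v => ?_)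
    simp only [nsq, Finset.mul_sum, Finset.sum_mul]
  have hcontR : Continuous fun x =>
      ∫ v, h x v ^ (p - 2) * nsq d (gradx d h x v) * gauss d v := by
    simp only [hsum]
    refine continuous_finsetSum _ fun i _ => ?_
    refine continuous_of_dominated (bound := fun v => c ^ (p - 2) * M ^ 2 * gauss d v)
      (fun x => (hFi i x).aestronglyMeasurable) (fun x => ae_of_all _ fun v => ?_)
      ((integrable_gauss d).const_mul _) (ae_of_all _ fun v => ?_)
    · rw [norm_mul, Real.norm_of_nonneg (gauss_nonneg d v)]
      exact mul_le_mul_of_nonneg_right (hFb i x v) (gauss_nonneg d v)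
    · exact ((hFc i).comp (continuous_id.prodMk continuous_const)).mul continuous_const
  have hproj (x : Fin d → ℝ) : 0 ≤ proj d h x :=
    integral_nonneg fun v => mul_nonneg (hpos x v).le (gauss_nonneg d v)
  unfold intMu
  -- Only the right-hand integrand has to be shown integrable, since the left one is nonnegative.
  refine integral_mono_of_nonneg (ae_of_all _ fun x => ?_)
    (hcontR.continuousOn.integrableOn_compact isCompact_Icc) (ae_of_all _ fun x => ?_)
  · exact mul_nonneg (rpow_nonneg (hproj x) _) (Finset.sum_nonneg fun i _ => sq_nonneg _)
  · beta_reduce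
    rw [hsum x, nsq, Finset.mul_sum]
    refine Finset.sum_le_sum fun i _ => ?_
    rw [grad1_proj hs habs hfd x i]
    exact jensen_gauss hp1.le hp2 hc
      (hs.continuous.comp (continuous_const.prodMk continuous_id))
      ((hgc i).comp (continuous_const.prodMk continuous_id))
      (fun v => (hcC x v).1) (fun v => (hcC x v).2) (hgb i x) (hFi i x)
end
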